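/- Let A be a finite-dimensional left Leibniz algebra over a field F of characteristic zero, let B be a subinvariant subalgebra of A, let c ∈ A, and let B̄ be the smallest subalgebra of A containing B such that cB̄ + B̄c ⊆ B̄. Then B̄ is a subinvariant subalgebra of A. -/

import Mathlib

open Submodule

section LeibnizDefs

variable {F : Type*} {A : Type*} [Field F] [AddCommGroup A] [Module F A]

/-- The span of all products `b*c` with `b ∈ B`, `c ∈ C`. -/
def mulSub (mul : A →ₗ[F] A →ₗ[F] A) (B C : Submodule F A) : Submodule F A :=
  Submodule.span F {z : A | ∃ b ∈ B, ∃ c ∈ C, mul b c = z}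

/-- `fSub mul B C = B·C + C·B`, the function `f(B,C)`. -/
def fSub (mul : A →ₗ[F] A →ₗ[F] A) (B C : Submodule F A) : Submodule F A :=
  mulSub mul B C ⊔ mulSub mul C B

/-- `fIter mul B C n = f^{n+1}(B,C)` (so index `0` is `f^1(B,C) = f(B,C)`). -/
def fIter (mul : A →ₗ[F] A →ₗ[F] A) (B C : Submodule F A) : ℕ → Submodule F A
  | 0 => fSub mul B C
  | n + 1 => fSub mul B (fIter mul B C n)

/-- `lcs mul B n = B^{n+1}`, the lower central series (index `0` is `B^1 = B`). -/
def lcs (mul : A →ₗ[F] A →ₗ[F] A) (B : Submodule F A) : ℕ → Submodule F A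
  | 0 => B
  | n + 1 => mulSub mul B (lcs mul B n)

/-- `ds mul B n = B^{(n+1)}`, the derived series (index `0` is `B^{(1)} = B`). -/
def ds (mul : A →ₗ[F] A →ₗ[F] A) (B : Submodule F A) : ℕ → Submodule F A
  | 0 => B
  | n + 1 => mulSub mul (ds mul B n) (ds mul B n)

/-- `B^ω = ⋂_{i ≥ 1} B^i`. -/
def omegaSub (mul : A →ₗ[F] A →ₗ[F] A) (B : Submodule F A) : Submodule F A :=
  ⨅ n, lcs mul B n

/-- `B` is a subalgebra: a subspace closed under multiplication. -/
def IsSubalg (mul : A →ₗ[F] A →ₗ[F] A) (B : Submodule F A) : Prop :=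
  ∀ x ∈ B, ∀ y ∈ B, mul x y ∈ B

/-- `I` is an ideal of the subalgebra `S`: `I ⊆ S` and `xI + Ix ⊆ I` for all `x ∈ S`. -/
def IsIdealIn (mul : A →ₗ[F] A →ₗ[F] A) (I S : Submodule F A) : Prop :=
  I ≤ S ∧ ∀ x ∈ S, ∀ y ∈ I, mul x y ∈ I ∧ mul y x ∈ I

/-- `B` is subinvariant in `S`: there is a chain of subalgebras
`B = c 0 ⊆ c 1 ⊆ ⋯ ⊆ c t = S` with each term an ideal of the next. -/
def IsSubinvariantIn (mul : A →ₗ[F] A →ₗ[F] A) (B S : Submodule F A) : Prop :=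
  ∃ (t : ℕ) (c : ℕ → Submodule F A), c 0 = B ∧ c t = S ∧
    (∀ i ≤ t, IsSubalg mul (c i)) ∧ ∀ i < t, IsIdealIn mul (c i) (c (i + 1))

/-- `B` is nilpotent: `B^m = 0` for some `m`. -/
def IsNilpotentSub (mul : A →ₗ[F] A →ₗ[F] A) (B : Submodule F A) : Prop :=
  ∃ m, lcs mul B m = ⊥

/-- `B` is solvable: `B^{(m)} = 0` for some `m`. -/
def IsSolvableSub (mul : A →ₗ[F] A →ₗ[F] A) (B : Submodule F A) : Prop :=
  ∃ m, ds mul B m = ⊥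

/-- The centralizer `Z_A(B) = {x : xb = 0 = bx for all b ∈ B}`. -/
def centralizerSet (mul : A →ₗ[F] A →ₗ[F] A) (B : Submodule F A) : Set A :=
  {x : A | ∀ b ∈ B, mul x b = 0 ∧ mul b x = 0}

/-- `R` is the radical (the maximal solvable ideal) of the subalgebra `S`. -/
def IsRadicalIn (mul : A →ₗ[F] A →ₗ[F] A) (S R : Submodule F A) : Prop :=
  IsIdealIn mul R S ∧ IsSolvableSub mul R ∧
    ∀ T, IsIdealIn mul T S → IsSolvableSub mul T → T ≤ R

/-- `N` is the nilradical (the maximal nilpotent ideal) of the subalgebra `S`. -/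
def IsNilradicalIn (mul : A →ₗ[F] A →ₗ[F] A) (S N : Submodule F A) : Prop :=
  IsIdealIn mul N S ∧ IsNilpotentSub mul N ∧
    ∀ T, IsIdealIn mul T S → IsNilpotentSub mul T → T ≤ N

/-- `H` is a Cartan subalgebra: a nilpotent self-normalizing subalgebra. -/
def IsCartan (mul : A →ₗ[F] A →ₗ[F] A) (H : Submodule F A) : Prop :=
  IsSubalg mul H ∧ IsNilpotentSub mul H ∧
    ∀ x : A, (∀ h ∈ H, mul x h ∈ H ∧ mul h x ∈ H) → x ∈ H

/-- The subalgebra generated by a set: the smallest subalgebra containing it. -/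
def subalgGen (mul : A →ₗ[F] A →ₗ[F] A) (s : Set A) : Submodule F A :=
  sInf {S : Submodule F A | IsSubalg mul S ∧ s ⊆ (S : Set A)}

end LeibnizDefs

/-!
Let `W = B^ω`. It is an ideal of `A`, and `B` acts nilpotently on `A ⧸ W` by left multiplication.
Climbing a subinvariant series of `B`, the image of `B` in `End (A ⧸ W)` stays in the trace radical
of the associative algebra generated by the image of each term: in characteristic zero the trace
radical consists of nilpotent operators, so it is a nilpotent ideal, and, being defined by traces,
it is stable under every derivation `⁅s, ·⁆` of the algebra. At the top of the series, the trace
radical pulls back to an ideal `N` of `A` that contains `B` and has `N^m ⊆ W ⊆ B` for some `m`.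
As `N` is an ideal containing `B`, also `B̄ ⊆ N`, and the subalgebras `B̄ + N^k` descend from `N`
to `B̄`, each an ideal of the preceding one.
-/

section TraceRadical

open Polynomial

attribute [local instance] LieRing.ofAssociativeRing

theorem mul_pow_le_pow_mul_pow_of_mul_le {α : Type*} [Monoid α] [Preorder α] [MulLeftMono α]
    [MulRightMono α] {a b : α} (h : b * a ≤ a * b) (n : ℕ) : (a * b) ^ n ≤ a ^ n * b ^ n := by
  have pow_mul_le (n : ℕ) : b ^ n * a ≤ a * b ^ n := by
    induction n with
    | zero => simp
    | succ n ih =>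
      calc b ^ (n + 1) * a = b ^ n * (b * a) := by rw [pow_succ, mul_assoc]
        _ ≤ b ^ n * (a * b) := mul_le_mul_right h _
        _ = b ^ n * a * b := (mul_assoc _ _ _).symm
        _ ≤ a * b ^ n * b := mul_le_mul_left ih _
        _ = a * b ^ (n + 1) := by rw [pow_succ, mul_assoc]
  induction n with
  | zero => simp
  | succ n ih =>
    calc (a * b) ^ (n + 1) = (a * b) ^ n * (a * b) := pow_succ _ _
      _ ≤ a ^ n * b ^ n * (a * b) := mul_le_mul_left ih _
      _ = a ^ n * (b ^ n * a) * b := by simp only [mul_assoc]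
      _ ≤ a ^ n * (a * b ^ n) * b := mul_le_mul_left (mul_le_mul_right (pow_mul_le n) _) _
      _ = a ^ (n + 1) * b ^ (n + 1) := by simp only [pow_succ, mul_assoc]

/-- The idempotent is the Fitting projection onto the part where `x` is invertible. -/
theorem exists_isIdempotentElem_mul_aeval_of_isIntegral {F R : Type*} [Field F] [Ring R]
    [Algebra F R] {x : R} (hx : IsIntegral F x) : ∃ (n : ℕ) (p : F[X]),
      IsIdempotentElem (x * aeval x p) ∧ x ^ n * (x * aeval x p) = x ^ n := by
  obtain ⟨q, hq, hXq⟩ := exists_eq_pow_rootMultiplicity_mul_and_not_dvd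
    (minpoly F x) (minpoly.ne_zero hx) 0
  set n := (minpoly F x).rootMultiplicity 0
  rw [C_0, sub_zero] at hq hXq
  obtain ⟨a, b, hab⟩ : IsCoprime (X ^ (n + 1)) q :=
    (irreducible_X.coprime_iff_not_dvd.mpr hXq).pow_left
  have aeval_eq_of_sub_eq {f g : F[X]} (r : F[X]) (h : f - g = X ^ n * q * r) :
      aeval x f = aeval x g := by
    rw [← sub_eq_zero, ← map_sub, h, ← hq, map_mul, minpoly.aeval, zero_mul]
  have he : x * aeval x (a * X ^ n) = aeval x (a * X ^ (n + 1)) := by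
    rw [pow_succ', mul_left_comm, map_mul _ X, aeval_X]
  refine ⟨n, a * X ^ n, ?_, ?_⟩
  · rw [he, IsIdempotentElem, ← map_mul]
    exact aeval_eq_of_sub_eq (-(a * b * X)) (by linear_combination (a * X ^ (n + 1)) * hab)
  · rw [he, ← aeval_X_pow (R := F), ← map_mul]
    exact aeval_eq_of_sub_eq (-b) (by linear_combination X ^ n * hab)

theorem isNilpotent_of_forall_trace_mul_aeval_eq_zero {F V : Type*} [Field F] [CharZero F]
    [AddCommGroup V] [Module F V] [FiniteDimensional F V] {x : Module.End F V}
    (h : ∀ p : F[X], LinearMap.trace F V (x * aeval x p) = 0) : IsNilpotent x := by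
  obtain ⟨n, p, he, hxe⟩ :=
    exists_isIdempotentElem_mul_aeval_of_isIntegral (Algebra.IsIntegral.isIntegral (R := F) x)
  refine ⟨n, ?_⟩
  rw [← hxe, LinearMap.IsIdempotentElem.eq_zero_of_trace_eq_zero he (h p), mul_zero]

theorem lie_mem_adjoin {R A : Type*} [CommRing R] [Ring A] [Algebra R A] {S : Set A} {s : A}
    (hs : ∀ y ∈ S, ⁅s, y⁆ ∈ Algebra.adjoin R S) {y : A} (hy : y ∈ Algebra.adjoin R S) :
    ⁅s, y⁆ ∈ Algebra.adjoin R S := by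
  induction hy using Algebra.adjoin_induction with
  | mem y hy => exact hs y hy
  | algebraMap r => rw [Ring.lie_def, Algebra.commutes, sub_self]; exact zero_mem _
  | add y z _ _ ihy ihz => rw [lie_add]; exact add_mem ihy ihz
  | mul y z hy hz ihy ihz =>
    have leibniz : ⁅s, y * z⁆ = ⁅s, y⁆ * z + y * ⁅s, z⁆ := by
      simp only [Ring.lie_def]; noncomm_ring
    rw [leibniz]
    exact add_mem (mul_mem ihy hz) (mul_mem hy ihz)

theorem adjoin_mul_le_mul_adjoin {R A : Type*} [CommRing R] [Ring A] [Algebra R A] {S : Set A}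
    {I : Submodule R A} (hI : ∀ s ∈ S, ∀ x ∈ I, ⁅s, x⁆ ∈ I) :
    Subalgebra.toSubmodule (Algebra.adjoin R S) * I ≤
      I * Subalgebra.toSubmodule (Algebra.adjoin R S) := by
  set U := Subalgebra.toSubmodule (Algebra.adjoin R S)
  have hIU : I ≤ I * U :=
    le_mul_of_one_le_right' (Submodule.one_le.mpr (Algebra.adjoin R S).one_mem)
  refine Submodule.mul_le.mpr fun y hy => ?_
  induction hy using Algebra.adjoin_induction with
  | mem s hs =>
    intro x hx
    rw [← sub_add_cancel (s * x) (x * s), ← Ring.lie_def]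
    exact add_mem (hIU (hI s hs x hx)) (Submodule.mul_mem_mul hx (Algebra.subset_adjoin hs))
  | algebraMap r =>
    intro x hx
    rw [← Algebra.smul_def]
    exact hIU (I.smul_mem r hx)
  | add y z _ _ ihy ihz =>
    intro x hx
    rw [add_mul]
    exact add_mem (ihy x hx) (ihz x hx)
  | mul y z _ _ ihy ihz =>
    intro x hx
    have left_mul : I * U ≤ (I * U).comap (LinearMap.mulLeft R y) := by
      refine Submodule.mul_le.mpr fun w hw u hu => ?_
      have hywu : y * w * u ∈ I * U * U := Submodule.mul_mem_mul (ihy w hw) hu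
      rwa [mul_assoc I, (Subalgebra.isIdempotentElem_toSubmodule _).eq, mul_assoc] at hywu
    rw [mul_assoc]
    exact left_mul (ihz x hx)

section CommRing

variable {R M : Type*} [CommRing R] [AddCommGroup M] [Module R M]

theorem exists_toSubmodule_pow_eq_bot_of_forall_isNilpotent [IsNoetherian R M]
    (L : LieSubalgebra R (Module.End R M)) (hL : ∀ x ∈ L, IsNilpotent x) :
    ∃ n, L.toSubmodule ^ n = ⊥ := by
  -- The library lemma used here is the theorem of Engel.
  have hnil : LieModule.IsNilpotent L M :=
    (LieModule.isNilpotent_iff_forall' (R := R)).mpr fun x => hL x x.2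
  obtain ⟨n, hn⟩ := (LieModule.isNilpotent_iff R L M).mp hnil
  have smul_top_le (k : ℕ) :
      L.toSubmodule ^ k • (⊤ : Submodule R M) ≤ LieModule.lowerCentralSeries R L M k := by
    induction k with
    | zero => simp
    | succ k ih =>
      rw [pow_succ', ← smul_eq_mul, Submodule.smul_assoc]
      refine Submodule.smul_le.mpr fun x hx v hv => ?_
      rw [LieModule.lowerCentralSeries_succ]
      exact LieSubmodule.lie_mem_lie (LieSubmodule.mem_top (⟨x, hx⟩ : L)) (ih hv)
  refine ⟨n, (Submodule.eq_bot_iff _).mpr fun f hf => LinearMap.ext fun v => ?_⟩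
  have hfv := smul_top_le n (Submodule.smul_mem_smul hf (Submodule.mem_top (x := v)))
  rwa [hn] at hfv

/-- The radical of the trace form `(x, y) ↦ tr (x * y)` on an algebra `U` of endomorphisms, as a
submodule of the full endomorphism algebra. -/
def traceRadical (U : Subalgebra R (Module.End R M)) : Submodule R (Module.End R M) where
  carrier := {x | x ∈ U ∧ ∀ y ∈ U, LinearMap.trace R M (x * y) = 0}
  add_mem' := fun ⟨ha, ha'⟩ ⟨hb, hb'⟩ =>
    ⟨add_mem ha hb, fun y hy => by rw [add_mul, map_add, ha' y hy, hb' y hy, add_zero]⟩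
  zero_mem' := ⟨zero_mem _, fun y _ => by rw [zero_mul, map_zero]⟩
  smul_mem' := fun r _ ⟨ha, ha'⟩ =>
    ⟨U.smul_mem ha r, fun y hy => by rw [smul_mul_assoc, map_smul, ha' y hy, smul_zero]⟩

theorem lie_mem_traceRadical {U : Subalgebra R (Module.End R M)} {s x : Module.End R M}
    (hs : ∀ y ∈ U, ⁅s, y⁆ ∈ U) (hx : x ∈ traceRadical U) : ⁅s, x⁆ ∈ traceRadical U := by
  refine ⟨hs x hx.1, fun y hy => ?_⟩
  rw [← lie_skew, neg_mul, map_neg, LinearMap.trace_lie_mul_eq, hx.2 _ (hs y hy), neg_zero]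

theorem le_traceRadical_adjoin [IsReduced R] {S : Set (Module.End R M)}
    {I : Submodule R (Module.End R M)} (hIS : (I : Set (Module.End R M)) ⊆ S)
    (hI : ∀ s ∈ S, ∀ x ∈ I, ⁅s, x⁆ ∈ I) {n : ℕ} (hn : I ^ n = ⊥) :
    I ≤ traceRadical (Algebra.adjoin R S) := by
  refine fun x hx => ⟨Algebra.subset_adjoin (hIS hx), fun y hy => ?_⟩
  have hxy : (x * y) ^ n ∈ I ^ n * Subalgebra.toSubmodule (Algebra.adjoin R S) ^ n :=
    mul_pow_le_pow_mul_pow_of_mul_le (adjoin_mul_le_mul_adjoin hI) n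
      (Submodule.pow_mem_pow _ (Submodule.mul_mem_mul hx hy) n)
  rw [hn, Submodule.bot_mul, Submodule.mem_bot] at hxy
  exact (LinearMap.isNilpotent_trace_of_isNilpotent ⟨n, hxy⟩).eq_zero

end CommRing

variable {F V : Type*} [Field F] [CharZero F] [AddCommGroup V] [Module F V] [FiniteDimensional F V]

theorem isNilpotent_of_mem_traceRadical {U : Subalgebra F (Module.End F V)} {x : Module.End F V}
    (hx : x ∈ traceRadical U) : IsNilpotent x :=
  isNilpotent_of_forall_trace_mul_aeval_eq_zero fun _ => hx.2 _ <|
    Algebra.adjoin_le (Set.singleton_subset_iff.mpr hx.1) (aeval_mem_adjoin_singleton F x)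

theorem exists_traceRadical_pow_eq_bot (U : Subalgebra F (Module.End F V)) :
    ∃ n, traceRadical U ^ n = ⊥ :=
  exists_toSubmodule_pow_eq_bot_of_forall_isNilpotent
    { traceRadical U with
      lie_mem' := fun hx hy =>
        lie_mem_traceRadical (fun _ => (lieSubalgebraOfSubalgebra F _ U).lie_mem hx.1) hy }
    fun _ => isNilpotent_of_mem_traceRadical

theorem inf_traceRadical_le_traceRadical {P Q : Submodule F (Module.End F V)} (hPQ : P ≤ Q)
    (hQP : ∀ q ∈ Q, ∀ p ∈ P, ⁅q, p⁆ ∈ P) :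
    P ⊓ traceRadical (Algebra.adjoin F (P : Set (Module.End F V))) ≤
      traceRadical (Algebra.adjoin F (Q : Set (Module.End F V))) := by
  obtain ⟨n, hn⟩ := exists_traceRadical_pow_eq_bot (Algebra.adjoin F (P : Set (Module.End F V)))
  refine le_traceRadical_adjoin (n := n) (inf_le_left.trans hPQ) (fun q hq x hx => ⟨?_, ?_⟩) ?_
  · exact hQP q hq x hx.1
  · exact lie_mem_traceRadical (fun _ => lie_mem_adjoin fun p hp =>
      Algebra.subset_adjoin (hQP q hq p hp)) hx.2
  · exact le_bot_iff.mp (hn ▸ pow_le_pow_left' inf_le_right n)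

end TraceRadical

section Leibniz

variable {F A : Type*} [Field F] [AddCommGroup A] [Module F A] {mul : A →ₗ[F] A →ₗ[F] A}
  {B C D I N S T W X : Submodule F A}

/-- The left Leibniz identity: every left multiplication is a derivation. -/
def IsLeftLeibniz (mul : A →ₗ[F] A →ₗ[F] A) : Prop :=
  ∀ x y z : A, mul x (mul y z) = mul (mul x y) z + mul y (mul x z)

theorem IsLeftLeibniz.mul_mul_eq_sub (hleib : IsLeftLeibniz mul) (x y z : A) :
    mul (mul x y) z = mul x (mul y z) - mul y (mul x z) :=
  eq_sub_of_add_eq (hleib x y z).symm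

theorem mulSub_eq_map₂ : mulSub mul B C = Submodule.map₂ mul B C :=
  (Submodule.map₂_eq_span_image2 mul B C).symm

theorem mul_mem_mulSub {b c : A} (hb : b ∈ B) (hc : c ∈ C) : mul b c ∈ mulSub mul B C :=
  Submodule.subset_span ⟨b, hb, c, hc, rfl⟩

theorem mulSub_le : mulSub mul B C ≤ D ↔ ∀ b ∈ B, ∀ c ∈ C, mul b c ∈ D := by
  rw [mulSub_eq_map₂, Submodule.map₂_le]

theorem mulSub_right_mono (mul : A →ₗ[F] A →ₗ[F] A) (B : Submodule F A) :
    Monotone (mulSub mul B) := fun _ _ h =>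
  mulSub_le.mpr fun _ hb _ hc => mul_mem_mulSub hb (h hc)

theorem IsIdealIn.isSubalg (h : IsIdealIn mul I S) : IsSubalg mul I :=
  fun x hx y hy => (h.2 x (h.1 hx) y hy).1

theorem IsSubalg.isIdealIn_self (hS : IsSubalg mul S) : IsIdealIn mul S S :=
  ⟨le_rfl, fun x hx y hy => ⟨hS x hx y hy, hS y hy x hx⟩⟩

namespace IsSubinvariantIn

theorem isSubalg (h : IsSubinvariantIn mul B T) : IsSubalg mul B := by
  obtain ⟨t, c, rfl, -, hc, -⟩ := h
  exact hc 0 t.zero_le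

theorem refl (hS : IsSubalg mul S) : IsSubinvariantIn mul S S :=
  ⟨0, fun _ => S, rfl, rfl, fun _ _ => hS, fun _ h => absurd h (Nat.not_lt_zero _)⟩

theorem head (hI : IsIdealIn mul I S) (hS : IsSubinvariantIn mul S T) :
    IsSubinvariantIn mul I T := by
  obtain ⟨t, c, rfl, rfl, hc, hideal⟩ := hS
  refine ⟨t + 1, fun | 0 => I | i + 1 => c i, rfl, rfl, ?_, ?_⟩
  · rintro (_ | i) hi
    · exact hI.isSubalg
    · exact hc i (Nat.le_of_succ_le_succ hi)
  · rintro (_ | i) hi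
    · exact hI
    · exact hideal i (Nat.lt_of_succ_lt_succ hi)

@[elab_as_elim]
theorem induction {P : Submodule F A → Prop} (h : IsSubinvariantIn mul B T) (base : P B)
    (step : ∀ S T, B ≤ S → IsIdealIn mul S T → P S → P T) : P T := by
  obtain ⟨t, c, rfl, rfl, -, hideal⟩ := h
  suffices ∀ i ≤ t, c 0 ≤ c i ∧ P (c i) from (this t le_rfl).2
  intro i
  induction i with
  | zero => exact fun _ => ⟨le_rfl, base⟩
  | succ i ih =>
    intro hi
    obtain ⟨hle, hP⟩ := ih (Nat.le_of_succ_le hi)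
    exact ⟨hle.trans (hideal i hi).1, step _ _ hle (hideal i hi) hP⟩

end IsSubinvariantIn

theorem lcs_eq_iterate (mul : A →ₗ[F] A →ₗ[F] A) (B : Submodule F A) (n : ℕ) :
    lcs mul B n = (mulSub mul B)^[n] B := by
  induction n with
  | zero => rfl
  | succ n ih => rw [lcs, ih, Function.iterate_succ_apply']

theorem lcs_antitone (hB : IsSubalg mul B) : Antitone (lcs mul B) := by
  rw [funext (lcs_eq_iterate mul B)]
  exact (mulSub_right_mono mul B).antitone_iterate_of_map_le (mulSub_le.mpr hB)

theorem mul_mem_lcs (hleib : IsLeftLeibniz mul) {i j : ℕ} {x y : A} (hx : x ∈ lcs mul B i)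
    (hy : y ∈ lcs mul B j) : mul x y ∈ lcs mul B (i + j + 1) := by
  induction i generalizing j x y with
  | zero => rw [zero_add]; exact mul_mem_mulSub hx hy
  | succ i ih =>
    suffices lcs mul B (i + 1) ≤ (lcs mul B (i + j + 1 + 1)).comap (mul.flip y) by
      rw [Nat.succ_add_eq_add_succ i j]
      exact this hx
    refine mulSub_le.mpr fun b hb z hz => ?_
    rw [Submodule.mem_comap, LinearMap.flip_apply, hleib.mul_mul_eq_sub]
    exact sub_mem (mul_mem_mulSub hb (ih hz hy)) (ih (j := j + 1) hz (mul_mem_mulSub hb hy))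

theorem IsIdealIn.isIdealIn_lcs (hleib : IsLeftLeibniz mul) (hN : IsIdealIn mul N S) (n : ℕ) :
    IsIdealIn mul (lcs mul N n) S := by
  induction n with
  | zero => exact hN
  | succ n ih =>
    refine ⟨(lcs_antitone hN.isSubalg n.le_succ).trans ih.1, fun x hx y hy => ⟨?_, ?_⟩⟩
    · suffices lcs mul N (n + 1) ≤ (lcs mul N (n + 1)).comap (mul x) from this hy
      refine mulSub_le.mpr fun b hb z hz => ?_
      rw [Submodule.mem_comap, hleib]
      exact add_mem (mul_mem_mulSub (hN.2 x hx b hb).1 hz) (mul_mem_mulSub hb (ih.2 x hx z hz).1)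
    · suffices lcs mul N (n + 1) ≤ (lcs mul N (n + 1)).comap (mul.flip x) from this hy
      refine mulSub_le.mpr fun b hb z hz => ?_
      rw [Submodule.mem_comap, LinearMap.flip_apply, hleib.mul_mul_eq_sub]
      exact sub_mem (mul_mem_mulSub hb (ih.2 x hx z hz).2)
        (mul_mem_lcs hleib (j := 0) hz (hN.2 x hx b hb).2)

theorem sup_lcs_succ_isIdealIn (hleib : IsLeftLeibniz mul) (hN : IsSubalg mul N)
    (hC : IsSubalg mul C) (hCN : C ≤ N) (k : ℕ) :
    IsIdealIn mul (C ⊔ lcs mul N (k + 1)) (C ⊔ lcs mul N k) := by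
  have hideal := hN.isIdealIn_self.isIdealIn_lcs hleib (k + 1)
  have hsup_le : C ⊔ lcs mul N k ≤ N := sup_le hCN (hN.isIdealIn_self.isIdealIn_lcs hleib k).1
  refine ⟨sup_le_sup_left (lcs_antitone hN k.le_succ) _, fun x hx y hy => ?_⟩
  have hxN := hsup_le hx
  obtain ⟨b, hb, n, hn, rfl⟩ := Submodule.mem_sup.mp hx
  obtain ⟨b', hb', n', hn', rfl⟩ := Submodule.mem_sup.mp hy
  constructor
  · rw [map_add, LinearMap.map_add₂ mul b n b', add_assoc]
    exact Submodule.add_mem_sup (hC b hb b' hb')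
      (add_mem (mul_mem_lcs hleib (j := 0) hn (hCN hb')) (hideal.2 _ hxN n' hn').1)
  · rw [LinearMap.map_add₂, map_add (mul b'), add_assoc]
    exact Submodule.add_mem_sup (hC b' hb' b hb)
      (add_mem (mul_mem_mulSub (hCN hb') hn) (hideal.2 _ hxN n' hn').2)

theorem IsSubalg.isSubinvariantIn_of_lcs_le (hleib : IsLeftLeibniz mul) (hC : IsSubalg mul C)
    (hT : IsSubalg mul T) (hN : IsIdealIn mul N T) (hCN : C ≤ N) {m : ℕ} (hm : lcs mul N m ≤ C) :
    IsSubinvariantIn mul C T := by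
  have sup_lcs_isSubinvariantIn (k : ℕ) : IsSubinvariantIn mul (C ⊔ lcs mul N k) T := by
    induction k with
    | zero => rw [lcs, sup_eq_right.mpr hCN]; exact .head hN (.refl hT)
    | succ k ih => exact .head (sup_lcs_succ_isIdealIn hleib hN.isSubalg hC hCN k) ih
  rw [← sup_eq_left.mpr hm]
  exact sup_lcs_isSubinvariantIn m

theorem exists_omegaSub_eq_lcs [FiniteDimensional F A] (hB : IsSubalg mul B) :
    ∃ n, ∀ k ≥ n, omegaSub mul B = lcs mul B k := by
  obtain ⟨n, hn⟩ := WellFoundedLT.antitone_chain_condition (lcs_antitone hB)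
  have homega : omegaSub mul B = lcs mul B n := by
    refine le_antisymm (iInf_le _ n) (le_iInf fun k => ?_)
    rcases le_total n k with hnk | hkn
    · exact (hn k hnk).le
    · exact lcs_antitone hB hkn
  exact ⟨n, fun k hk => homega.trans (hn k hk)⟩

theorem mulSub_omegaSub [FiniteDimensional F A] (hB : IsSubalg mul B) :
    mulSub mul B (omegaSub mul B) = omegaSub mul B := by
  obtain ⟨n, hn⟩ := exists_omegaSub_eq_lcs hB
  conv_lhs => rw [hn n le_rfl]
  exact (hn (n + 1) n.le_succ).symm

/-- A Nakayama lemma: `B` acts by left multiplication, nilpotently on `T` modulo `W`. -/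
theorem le_of_le_sup_mulSub (hBW : mulSub mul B W ≤ W) (hXT : X ≤ T)
    (hX : X ≤ W ⊔ mulSub mul B X) {n : ℕ} (hn : (mulSub mul B)^[n] T ≤ W) : X ≤ W := by
  have le_sup_iterate (k : ℕ) : X ≤ W ⊔ (mulSub mul B)^[k] T := by
    induction k with
    | zero => exact le_sup_of_le_right hXT
    | succ k ih =>
      rw [Function.iterate_succ_apply']
      calc X ≤ W ⊔ mulSub mul B X := hX
        _ ≤ W ⊔ mulSub mul B (W ⊔ (mulSub mul B)^[k] T) :=
          sup_le_sup_left (mulSub_right_mono mul B ih) W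
        _ = W ⊔ mulSub mul B W ⊔ mulSub mul B ((mulSub mul B)^[k] T) := by
          simp only [mulSub_eq_map₂, Submodule.map₂_sup_right, sup_assoc]
        _ = W ⊔ mulSub mul B ((mulSub mul B)^[k] T) := by rw [sup_eq_left.mpr hBW]
  exact (le_sup_iterate n).trans (sup_le le_rfl hn)

theorem IsIdealIn.trans_of_mulSub_eq (hleib : IsLeftLeibniz mul) (hWS : IsIdealIn mul W S)
    (hST : IsIdealIn mul S T) (hBS : B ≤ S) (hBW : mulSub mul B W = W) {n : ℕ}
    (hn : (mulSub mul B)^[n] T ≤ W) : IsIdealIn mul W T := by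
  have le_of_map_le {f : A →ₗ[F] A} (hfT : ∀ w ∈ W, f w ∈ T)
      (hf : ∀ b ∈ B, ∀ w ∈ W, f (mul b w) ∈ W ⊔ mulSub mul B (W.map f)) : W.map f ≤ W := by
    refine le_of_le_sup_mulSub hBW.le (Submodule.map_le_iff_le_comap.mpr hfT) ?_ hn
    rw [Submodule.map_le_iff_le_comap]
    conv_lhs => rw [← hBW]
    exact mulSub_le.mpr hf
  refine ⟨hWS.1.trans hST.1, fun x hx w hw => ⟨?_, ?_⟩⟩
  · refine le_of_map_le (f := mul x) (fun w hw => hST.1 (hST.2 x hx w (hWS.1 hw)).1)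
      (fun b hb w hw => ?_) (Submodule.mem_map_of_mem hw)
    rw [hleib]
    exact Submodule.add_mem_sup (hWS.2 _ (hST.2 x hx b (hBS hb)).1 w hw).1
      (mul_mem_mulSub hb (Submodule.mem_map_of_mem hw))
  · refine le_of_map_le (f := mul.flip x) (fun w hw => hST.1 (hST.2 x hx w (hWS.1 hw)).2)
      (fun b hb w hw => ?_) (Submodule.mem_map_of_mem hw)
    rw [LinearMap.flip_apply, hleib.mul_mul_eq_sub]
    exact sub_mem (Submodule.mem_sup_right (mul_mem_mulSub hb (Submodule.mem_map_of_mem hw)))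
      (Submodule.mem_sup_left (hWS.2 _ (hST.2 x hx b (hBS hb)).2 w hw).2)

theorem IsSubinvariantIn.isIdealIn_omegaSub_and_exists_iterate_le [FiniteDimensional F A]
    (hleib : IsLeftLeibniz mul) (hB : IsSubinvariantIn mul B T) :
    IsIdealIn mul (omegaSub mul B) T ∧ ∃ n, (mulSub mul B)^[n] T ≤ omegaSub mul B := by
  refine hB.induction ?_ fun S T hBS hST ⟨hideal, n, hn⟩ => ?_
  · obtain ⟨n, hn⟩ := exists_omegaSub_eq_lcs hB.isSubalg
    rw [hn n le_rfl]
    exact ⟨hB.isSubalg.isIdealIn_self.isIdealIn_lcs hleib n, n, (lcs_eq_iterate mul B n).ge⟩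
  · have hBT : mulSub mul B T ≤ S := mulSub_le.mpr fun b hb x hx => (hST.2 x hx b (hBS hb)).2
    have hnT : (mulSub mul B)^[n + 1] T ≤ omegaSub mul B :=
      ((mulSub_right_mono mul B).iterate n hBT).trans hn
    have hW := mulSub_omegaSub hB.isSubalg
    exact ⟨hideal.trans_of_mulSub_eq hleib hST hBS hW hnT, n + 1, hnT⟩

section Representation

attribute [local instance] LieRing.ofAssociativeRing

variable {V : Type*} [AddCommGroup V] [Module F V] {ρ : A →ₗ[F] Module.End F V}

theorem map_pow_eq_bot_iff {π : A →ₗ[F] V} (hπ : Function.Surjective π)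
    (hρπ : ∀ x y, ρ x (π y) = π (mul x y)) {n : ℕ} :
    B.map ρ ^ n = ⊥ ↔ (mulSub mul B)^[n] ⊤ ≤ LinearMap.ker π := by
  have map_mulSub (X : Submodule F A) : (mulSub mul B X).map π = B.map ρ • X.map π := by
    refine le_antisymm ?_ (Submodule.smul_le.mpr ?_)
    · refine Submodule.map_le_iff_le_comap.mpr (mulSub_le.mpr fun b hb x hx => ?_)
      rw [Submodule.mem_comap, ← hρπ]
      exact Submodule.smul_mem_smul (Submodule.mem_map_of_mem hb) (Submodule.mem_map_of_mem hx)
    · rintro _ ⟨b, hb, rfl⟩ _ ⟨x, hx, rfl⟩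
      exact ⟨mul b x, mul_mem_mulSub hb hx, (hρπ b x).symm⟩
  have map_iterate (k : ℕ) :
      ((mulSub mul B)^[k] ⊤).map π = B.map ρ ^ k • (⊤ : Submodule F V) := by
    induction k with
    | zero =>
      rw [Function.iterate_zero_apply, Submodule.map_top, LinearMap.range_eq_top.mpr hπ, pow_zero,
        Submodule.one_smul]
    | succ k ih =>
      rw [Function.iterate_succ_apply', map_mulSub, ih, pow_succ', ← smul_eq_mul,
        Submodule.smul_assoc]
  rw [LinearMap.le_ker_iff_map, map_iterate]
  refine ⟨fun h => by rw [h, Submodule.bot_smul], fun h => (Submodule.eq_bot_iff _).mpr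
    fun f hf => LinearMap.ext fun v => ?_⟩
  have hfv := Submodule.smul_mem_smul hf (Submodule.mem_top (x := v))
  rwa [h] at hfv

theorem map_mul_eq_lie (hleib : IsLeftLeibniz mul) {π : A →ₗ[F] V} (hπ : Function.Surjective π)
    (hρπ : ∀ x y, ρ x (π y) = π (mul x y)) (x y : A) : ρ (mul x y) = ⁅ρ x, ρ y⁆ := by
  refine LinearMap.ext (hπ.forall.mpr fun z => ?_)
  rw [Ring.lie_def, LinearMap.sub_apply, Module.End.mul_apply, Module.End.mul_apply]
  simp only [hρπ, ← map_sub, hleib.mul_mul_eq_sub]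

theorem isIdealIn_comap_traceRadical (hρ : ∀ x y, ρ (mul x y) = ⁅ρ x, ρ y⁆)
    {U : Subalgebra F (Module.End F V)} (hU : ∀ x, ρ x ∈ U) :
    IsIdealIn mul ((traceRadical U).comap ρ) ⊤ := by
  have lie_mem (x : A) {f : Module.End F V} (hf : f ∈ traceRadical U) :
      ⁅ρ x, f⁆ ∈ traceRadical U :=
    lie_mem_traceRadical (fun _ => (lieSubalgebraOfSubalgebra F _ U).lie_mem (hU x)) hf
  refine ⟨le_top, fun x _ y hy => ⟨?_, ?_⟩⟩
  · rw [Submodule.mem_comap, hρ]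
    exact lie_mem x hy
  · rw [Submodule.mem_comap, hρ, ← lie_skew]
    exact neg_mem (lie_mem x hy)

theorem IsSubinvariantIn.map_le_traceRadical [CharZero F] [FiniteDimensional F V]
    (hρ : ∀ x y, ρ (mul x y) = ⁅ρ x, ρ y⁆) (hB : IsSubinvariantIn mul B T) {n : ℕ}
    (hn : B.map ρ ^ n = ⊥) :
    B.map ρ ≤ traceRadical (Algebra.adjoin F (T.map ρ : Set (Module.End F V))) := by
  have lie_mem_map {I S : Submodule F A} (hI : IsIdealIn mul I S) :
      ∀ q ∈ S.map ρ, ∀ p ∈ I.map ρ, ⁅q, p⁆ ∈ I.map ρ := by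
    rintro _ ⟨x, hx, rfl⟩ _ ⟨y, hy, rfl⟩
    exact ⟨mul x y, (hI.2 x hx y hy).1, hρ x y⟩
  refine hB.induction ?_ fun S T hBS hST ih => ?_
  · exact le_traceRadical_adjoin le_rfl (lie_mem_map hB.isSubalg.isIdealIn_self) hn
  · exact (le_inf (Submodule.map_mono hBS) ih).trans
      (inf_traceRadical_le_traceRadical (Submodule.map_mono hST.1) (lie_mem_map hST))

/-- The action of `A` by left multiplication on its quotient by a left ideal `W`. -/
def quotientLeftMul (mul : A →ₗ[F] A →ₗ[F] A) (W : Submodule F A)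
    (hW : ∀ x, ∀ y ∈ W, mul x y ∈ W) : A →ₗ[F] Module.End F (A ⧸ W) :=
  W.mapQLinear W ∘ₗ mul.codRestrict (Submodule.compatibleMaps W W) hW

theorem IsSubinvariantIn.exists_isIdealIn_lcs_le [CharZero F] [FiniteDimensional F A]
    (hleib : IsLeftLeibniz mul) (hB : IsSubinvariantIn mul B ⊤) :
    ∃ N, IsIdealIn mul N ⊤ ∧ B ≤ N ∧ ∃ m, lcs mul N m ≤ B := by
  obtain ⟨hW, n, hn⟩ := hB.isIdealIn_omegaSub_and_exists_iterate_le hleib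
  set W := omegaSub mul B
  let ρ := quotientLeftMul mul W fun x y hy => (hW.2 x trivial y hy).1
  have pow_eq_bot_iff {N : Submodule F A} {k : ℕ} :
      N.map ρ ^ k = ⊥ ↔ (mulSub mul N)^[k] ⊤ ≤ W := by
    rw [map_pow_eq_bot_iff W.mkQ_surjective fun _ _ => rfl, W.ker_mkQ]
  have hρ : ∀ x y, ρ (mul x y) = ⁅ρ x, ρ y⁆ :=
    map_mul_eq_lie hleib W.mkQ_surjective fun _ _ => rfl
  let U := Algebra.adjoin F ((⊤ : Submodule F A).map ρ : Set (Module.End F (A ⧸ W)))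
  obtain ⟨m, hm⟩ := exists_traceRadical_pow_eq_bot U
  let N := (traceRadical U).comap ρ
  have hNm : (mulSub mul N)^[m] ⊤ ≤ W := pow_eq_bot_iff.mp <|
    le_bot_iff.mp (hm ▸ pow_le_pow_left' (Submodule.map_comap_le ρ _) m)
  refine ⟨N, isIdealIn_comap_traceRadical hρ fun x =>
    Algebra.subset_adjoin (Submodule.mem_map_of_mem trivial), ?_, m, ?_⟩
  · exact Submodule.map_le_iff_le_comap.mp (hB.map_le_traceRadical hρ (pow_eq_bot_iff.mpr hn))
  · calc lcs mul N m = (mulSub mul N)^[m] N := lcs_eq_iterate mul N m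
      _ ≤ (mulSub mul N)^[m] ⊤ := (mulSub_right_mono mul N).iterate m le_top
      _ ≤ W := hNm
      _ ≤ B := iInf_le _ 0

end Representation

end Leibniz

theorem stmt_18_general {F A : Type*} [Field F] [CharZero F]
    [AddCommGroup A] [Module F A] [FiniteDimensional F A]
    {mul : A →ₗ[F] A →ₗ[F] A} (hleib : IsLeftLeibniz mul)
    {B C : Submodule F A} (hB : IsSubinvariantIn mul B ⊤) (hC : IsSubalg mul C) (hBC : B ≤ C)
    (hCideal : ∀ I, IsIdealIn mul I ⊤ → B ≤ I → C ≤ I) :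
    IsSubinvariantIn mul C ⊤ := by
  obtain ⟨N, hN, hBN, m, hm⟩ := hB.exists_isIdealIn_lcs_le hleib
  exact hC.isSubinvariantIn_of_lcs_le hleib (fun _ _ _ _ => trivial) hN (hCideal N hN hBN)
    (hm.trans hBC)

/-- over characteristic zero, if `B` is subinvariant, `c ∈ A` and
`B̄` is the smallest subalgebra containing `B` with `cB̄ + B̄c ⊆ B̄`, then `B̄`
is subinvariant in `A`. -/
theorem stmt_18 {F A : Type*} [Field F] [CharZero F]
    [AddCommGroup A] [Module F A] [FiniteDimensional F A]
    (mul : A →ₗ[F] A →ₗ[F] A)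
    (hleib : ∀ x y z : A, mul x (mul y z) = mul (mul x y) z + mul y (mul x z))
    (B : Submodule F A) (hB : IsSubinvariantIn mul B ⊤)
    (c : A) (Bbar : Submodule F A)
    (hsub : IsSubalg mul Bbar) (hBle : B ≤ Bbar)
    (hclosed : ∀ x ∈ Bbar, mul c x ∈ Bbar ∧ mul x c ∈ Bbar)
    (hmin : ∀ S : Submodule F A, IsSubalg mul S → B ≤ S →
      (∀ x ∈ S, mul c x ∈ S ∧ mul x c ∈ S) → Bbar ≤ S) :
    IsSubinvariantIn mul Bbar ⊤ := by
  exact stmt_18_general hleib hB hsub hBle fun I hI hBI =>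
    hmin I hI.isSubalg hBI fun x hx => hI.2 c trivial x hx
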